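/- Let K be an algebraically closed field of characteristic zero, let t ∈ K be transcendental over ℚ, and let α ∈ K satisfy α² − α + 4 = 0. Then the polynomial A₁₅ = x₁⁷ − (α−1)x₁⁶x₂ − 2x₁⁵x₂² + (7α−3)t·x₁⁵ + (α+1)x₁⁴x₂³ + 22t·x₁⁴x₂ + (5α+65)t·x₁⁴ − (α−2)x₁³x₂⁴ − (10α+2)t·x₁³x₂² − (50α−70)t·x₁³x₂ + (9α−69)t²·x₁³ − 2x₁²x₂⁵ + (10α−12)t·x₁²x₂³ − 90t·x₁²x₂² + (39α+33)t²·x₁²x₂ + (210α−150)t²·x₁² + α·x₁x₂⁶ + 22t·x₁x₂⁴ + (50α+20)t·x₁x₂³ − (39α−72)t²·x₁x₂² + 450t²·x₁x₂ − ((63α+45)t³ − (225α+900)t²)·x₁ + x₂⁷ − (7α−4)t·x₂⁵ − (5α−70)t·x₂⁴ − (9α+60)t²·x₂³ − (210α−60)t²·x₂² + ((63α−108)t³ − (225α−1125)t²)·x₂ − 675t³ is irreducible in K[x₁,x₂]. -/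

import Mathlib

/-!
Grade `K[x₁, x₂]` by total degree. The top form of `A₁₅` divides `x₁¹⁵ + x₂¹⁵` (`separable_topForm`),
so it is squarefree, and the part of degree 6 of `A₁₅` is zero. Hence in a factorisation `A₁₅ = B C`
with total degrees `d + e = 7` the leading forms of `B` and `C` are coprime, and comparing degree 6
shows that the parts of `B` and `C` of degrees `d - 1` and `e - 1` vanish (`subleading_eq_zero`).
Neither leading form is divisible by `x₂`, so `B(x, 0)` and `C(x, 0)` still have degrees `d` and `e`
and both lack their subleading term.

By symmetry `d ≤ 3`. For `d = 1` this gives `B(0, 0) = 0`, while `A₁₅(0, 0) = -675 t³ ≠ 0`. For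
`d = 2` and `d = 3` the factorisation of `A₁₅(x, 0)` is a small polynomial system for the
coefficients (`no_deg_two`, `no_deg_three`). After rescaling by powers of `t`, all of its equations
except the one from the coefficient of `x` are over `ℚ(α)`, and they force the unknowns to be
algebraic over `ℚ`. As `t` is transcendental, the remaining equation splits into two, and the system
over `ℚ(α)` so obtained has no solution.
-/

section Helpers

open Polynomial

/-! ### Scalar systems over `ℚ(α)(t)` -/

section Scalars

variable {K : Type*} [Field K] [CharZero K]

/-- The algebraic closure of `ℚ` in `K` contains every root in `K` of a cubic over it. -/
lemma mem_of_cubic {z c₃ c₂ c₁ c₀ : K}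
    (h₃ : c₃ ∈ algebraicClosure ℚ K) (h₂ : c₂ ∈ algebraicClosure ℚ K)
    (h₁ : c₁ ∈ algebraicClosure ℚ K) (h₀ : c₀ ∈ algebraicClosure ℚ K) (hne : c₃ ≠ 0)
    (h : c₃ * z ^ 3 + c₂ * z ^ 2 + c₁ * z + c₀ = 0) : z ∈ algebraicClosure ℚ K := by
  have : Algebra.IsAlgebraic ℚ (algebraicClosure ℚ K) := ⟨fun x => by
    have := mem_algebraicClosure_iff.1 x.2
    exact (isAlgebraic_algebraMap_iff (algebraMap (algebraicClosure ℚ K) K).injective).1 this⟩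
  rw [mem_algebraicClosure_iff]
  apply IsAlgebraic.restrictScalars ℚ (S := algebraicClosure ℚ K)
  refine ⟨C ⟨c₃, h₃⟩ * X ^ 3 + C ⟨c₂, h₂⟩ * X ^ 2 + C ⟨c₁, h₁⟩ * X + C ⟨c₀, h₀⟩, ?_, ?_⟩
  · intro h0
    have := congrArg (fun p => (p.coeff 3 : K)) h0
    simp at this
    exact hne this
  · simpa [IntermediateField.algebraMap_apply] using h

/-- A transcendental `t` is linearly independent from `1` over the algebraic numbers. -/
lemma eq_zero_of_mul_add {t x y : K} (htr : Transcendental ℚ t)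
    (hx : x ∈ algebraicClosure ℚ K) (hy : y ∈ algebraicClosure ℚ K)
    (h : t * x + y = 0) : x = 0 ∧ y = 0 := by
  have hx0 : x = 0 := by
    by_contra hne
    refine htr (mem_algebraicClosure_iff.1 ?_)
    have : t = -y / x := by rw [eq_div_iff hne]; linear_combination h
    rw [this]
    exact div_mem (neg_mem hy) hx
  subst hx0
  exact ⟨rfl, by simpa using h⟩

variable {t α : K}

lemma alpha_mem (hα : α ^ 2 - α + 4 = 0) : α ∈ algebraicClosure ℚ K :=
  mem_of_cubic (c₃ := 1) (c₂ := -1) (c₁ := 4) (c₀ := 0) (one_mem _) (neg_mem (one_mem _))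
    (ofNat_mem _ 4) (zero_mem _) one_ne_zero (by linear_combination α * hα)

/-- The coefficient system of
`A(x, 0) = (x³ + ut x + wt)(x⁴ + lt x² + mt x + nt²)` has no solution. Eliminating `w, l, m, n` from
the equations free of `t` gives a cubic for `u` over `ℚ(α)`, so all unknowns are algebraic and the
equation `h₁` splits into its two coefficients as a polynomial in `t`; the resulting system over
`ℚ(α)` is inconsistent. -/
lemma no_deg_three (htr : Transcendental ℚ t) (hα : α ^ 2 - α + 4 = 0) {u w l m n : K}
    (h₅ : l + u = 7 * α - 3) (h₄ : m + w = 5 * α + 65) (h₃ : n + u * l = 9 * α - 69)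
    (h₂ : u * m + w * l = 210 * α - 150)
    (h₁ : t * (u * n) + w * m = -((63 * α + 45) * t - (225 * α + 900)))
    (h₀ : w * n = -675) : False := by
  have hαk := alpha_mem hα
  have num (k : ℕ) [k.AtLeastTwo] : (OfNat.ofNat k : K) ∈ algebraicClosure ℚ K := ofNat_mem _ k
  have hn : n ≠ 0 := by rintro rfl; norm_num at h₀
  have ha : (5 * α + 65 : K) ≠ 0 := by
    intro h
    -- `4650` is the norm of `5α + 65` from `ℚ(α)` to `ℚ`
    have : (4650 : K) = 0 := by linear_combination (70 - 5 * α) * h + 25 * hα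
    norm_num at this
  have hl : l = 7 * α - 3 - u := by linear_combination h₅
  have hm : m = 5 * α + 65 - w := by linear_combination h₄
  subst hl hm
  have hn' : n = 9 * α - 69 - u * (7 * α - 3 - u) := by linear_combination h₃
  have hw : w = -675 / n := by rw [eq_div_iff hn]; exact h₀
  have hu : u ∈ algebraicClosure ℚ K := by
    refine mem_of_cubic (z := u) (c₃ := -(5 * α + 65))
      (c₂ := (210 * α - 150) + (5 * α + 65) * (7 * α - 3))
      (c₁ := -((210 * α - 150) * (7 * α - 3)) - (5 * α + 65) * (9 * α - 69) - 1350)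
      (c₀ := (210 * α - 150) * (9 * α - 69) + 675 * (7 * α - 3))
      ?_ ?_ ?_ ?_ (neg_ne_zero.2 ha) ?_
    iterate 4
      repeat' first
        | exact hαk | exact num _ | apply neg_mem | apply add_mem | apply sub_mem | apply mul_mem
    rw [hn'] at h₀
    linear_combination (7 * α - 3 - 2 * u) * h₀ - (9 * α - 69 - u * (7 * α - 3 - u)) * h₂
  have hnk : n ∈ algebraicClosure ℚ K := by
    rw [hn']
    repeat' first
      | exact hαk | exact hu | exact num _ | apply add_mem | apply sub_mem | apply mul_mem
  have hwk : w ∈ algebraicClosure ℚ K := by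
    rw [hw]
    exact div_mem (neg_mem (num _)) hnk
  obtain ⟨hx, hy⟩ := eq_zero_of_mul_add htr (x := u * n + (63 * α + 45))
    (y := w * (5 * α + 65 - w) - (225 * α + 900))
    (by
      repeat' first
        | exact hαk | exact hu | exact hnk | exact num _ | apply add_mem | apply mul_mem)
    (by
      repeat' first
        | exact hαk | exact hwk | exact num _ | apply sub_mem | apply add_mem | apply mul_mem)
    (by linear_combination h₁)
  -- comparing `h₀` with `hx` makes `u` proportional to `w`; then `h₂` and `hy` are two quadratic
  -- equations for `w` alone, with `hlin` their combination free of `w ^ 2`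
  have huw : u = (7 * α + 5) / 75 * w := by
    linear_combination (w * hx - u * h₀) / (-675)
  rw [huw] at h₂
  have hlin : (-82 / 15 + 2 / 15 * α) * w = -102 - 30 * α := by
    linear_combination h₂ - 2 * ((7 * α + 5) / 75) * hy + (7 / 15 * w - 42) * hα
  -- the resultant of `hlin` and `hy` in `w`; its norm to `ℚ` is `3815424`
  have hfin : (576 - 1008 * α : K) = 0 := by
    linear_combination -(-102 - 30 * α + (-82 / 15 + 2 / 15 * α) * (w - (5 * α + 65))) * hlin
      - (-82 / 15 + 2 / 15 * α) ^ 2 * hy - (120 + 24 * α) * hα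
  have : (3815424 : K) = 0 := by
    linear_combination (576 - 1008 * (1 - α)) * hfin + 1008 ^ 2 * hα
  norm_num at this

/-- The coefficient system of
`A(x, 0) = (x² + wt)(x⁵ + pt x³ + qt x² + rt² x + st²)` has no solution: `w` satisfies a quadratic
equation over `ℚ(α)`, so `h₁` splits into its coefficients in `t`, and the constant one,
`225α + 900`, is not zero. -/
lemma no_deg_two (htr : Transcendental ℚ t) (hα : α ^ 2 - α + 4 = 0) {w p q r s : K}
    (h₄ : q = 5 * α + 65)
    (h₂ : s + w * q = 210 * α - 150)
    (h₁ : t * (w * r) = -((63 * α + 45) * t - (225 * α + 900)))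
    (h₃ : r + w * p = 9 * α - 69) (h₅ : p + w = 7 * α - 3)
    (h₀ : w * s = -675) : False := by
  have hαk := alpha_mem hα
  have num (k : ℕ) [k.AtLeastTwo] : (OfNat.ofNat k : K) ∈ algebraicClosure ℚ K := ofNat_mem _ k
  have ha : (5 * α + 65 : K) ≠ 0 := by
    intro h
    -- `4650` is the norm of `5α + 65` from `ℚ(α)` to `ℚ`
    have : (4650 : K) = 0 := by linear_combination (70 - 5 * α) * h + 25 * hα
    norm_num at this
  have hwk : w ∈ algebraicClosure ℚ K := by
    -- the quadratic for `w`, multiplied by `w`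
    refine mem_of_cubic (z := w) (c₃ := 5 * α + 65) (c₂ := -(210 * α - 150)) (c₁ := -675)
      (c₀ := 0) ?_ ?_ ?_ (zero_mem _) ha ?_
    iterate 3
      repeat' first
        | exact hαk | exact num _ | apply neg_mem | apply add_mem | apply sub_mem | apply mul_mem
    subst h₄
    linear_combination w ^ 2 * h₂ - w * h₀
  have hp : p = 7 * α - 3 - w := by linear_combination h₅
  have hr : r = 9 * α - 69 - w * (7 * α - 3 - w) := by
    rw [← hp]; linear_combination h₃
  obtain ⟨-, hy⟩ := eq_zero_of_mul_add htr (x := w * r + (63 * α + 45))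
    (y := -(225 * α + 900))
    (by
      rw [hr]
      repeat' first
        | exact hαk | exact hwk | exact num _ | apply sub_mem | apply add_mem | apply mul_mem)
    (by
      repeat' first
        | exact hαk | exact num _ | apply neg_mem | apply add_mem | apply mul_mem)
    (by linear_combination h₁)
  -- `1215000` is the norm of `-(225α + 900)`
  have : (1215000 : K) = 0 := by
    linear_combination (-(225 * (1 - α) + 900)) * hy + 225 ^ 2 * hα
  norm_num at this

end Scalars

/-! ### The grading of `K[x₁, x₂]` by total degree -/

section Graded

variable {K : Type*} [Field K]

/-- The homomorphism `K[x₁, x₂] → K[X][S]`, `x₁ ↦ S`, `x₂ ↦ X S`. The coefficient of `Sⁿ` in the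
image of `P` is the homogeneous part of degree `n` of `P`, dehomogenised by `x₁ = 1`; its value at
`X = 0` is the coefficient of `x₁ⁿ` in `P`. -/
noncomputable def gradedHom (K : Type*) [Field K] : MvPolynomial (Fin 2) K →ₐ[K] K[X][X] :=
  MvPolynomial.aeval ![X, C X * X]

lemma natDegree_coeff_gradedHom (P : MvPolynomial (Fin 2) K) (n : ℕ) :
    ((gradedHom K P).coeff n).natDegree ≤ n := by
  induction P using MvPolynomial.induction_on generalizing n with
  | C a =>
    have : gradedHom K (MvPolynomial.C a) = C (C a) := by
      simp [gradedHom, Polynomial.algebraMap_apply]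
    rw [this, coeff_C]
    split <;> simp
  | add p q hp hq =>
    rw [map_add, coeff_add]
    exact natDegree_add_le_of_degree_le (hp n) (hq n)
  | mul_X p i hp =>
    rw [map_mul]
    fin_cases i
    · have : gradedHom K (MvPolynomial.X 0) = X := by simp [gradedHom]
      simp only [Fin.zero_eta, this]
      cases n with
      | zero => simp
      | succ n => rw [coeff_mul_X]; exact (hp n).trans n.le_succ
    · have : gradedHom K (MvPolynomial.X 1) = C X * X := by simp [gradedHom]
      simp only [Fin.mk_one, this, ← mul_assoc]
      cases n with
      | zero => simp
      | succ n =>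
        rw [coeff_mul_X, coeff_mul_C]
        exact natDegree_mul_le_of_le (hp n) natDegree_X_le

/-- In `Frac K[x₁, x₂]`, the substitution `S ↦ x₁`, `X ↦ x₂ / x₁` is a left inverse. -/
lemma gradedHom_injective : Function.Injective (gradedHom K) := by
  let L := FractionRing (MvPolynomial (Fin 2) K)
  let x (i : Fin 2) : L := algebraMap (MvPolynomial (Fin 2) K) L (MvPolynomial.X i)
  let ψ : K[X][X] →ₐ[K] L := aevalTower (aeval (x 1 / x 0)) (x 0)
  have hx : x 0 ≠ 0 := by
    simp [x]
  have h : ψ.comp (gradedHom K) = Algebra.algHom K (MvPolynomial (Fin 2) K) L := by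
    apply MvPolynomial.algHom_ext
    intro i
    fin_cases i
    · simp [ψ, gradedHom, x]
      rfl
    · simp [ψ, gradedHom]
      rw [div_mul_cancel₀ _ hx]
      rfl
  have hinj : Function.Injective (ψ.comp (gradedHom K)) := by
    rw [h]
    exact IsFractionRing.injective (MvPolynomial (Fin 2) K) L
  exact Function.Injective.of_comp hinj

lemma isUnit_of_natDegree_gradedHom {P : MvPolynomial (Fin 2) K} (hP : P ≠ 0)
    (h : (gradedHom K P).natDegree = 0) : IsUnit P := by
  have h0 := natDegree_coeff_gradedHom P 0
  obtain ⟨c, hc⟩ : ∃ c, (gradedHom K P).coeff 0 = C c :=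
    ⟨_, eq_C_of_natDegree_le_zero h0⟩
  have hPc : P = MvPolynomial.C c := by
    apply gradedHom_injective
    rw [eq_C_of_natDegree_eq_zero h, hc]
    simp [gradedHom, Polynomial.algebraMap_apply]
  subst hPc
  have : c ≠ 0 := by rintro rfl; simp at hP
  exact (isUnit_iff_ne_zero.2 this).map MvPolynomial.C

/-- If `p q` is squarefree and the degree just below the top one of a product with leading parts
`p, q` vanishes, then the parts `r, s` just below `p, q` vanish. -/
lemma subleading_eq_zero {p q r s : K[X]} (hpq : (p * q).Separable) (h : p * s + r * q = 0)
    (hr : r.natDegree < p.natDegree) : r = 0 ∧ s = 0 := by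
  have hr0 : r = 0 := by
    refine eq_zero_of_dvd_of_natDegree_lt (hpq.isCoprime.dvd_of_dvd_mul_right ?_) hr
    exact ⟨-s, by linear_combination h⟩
  have hp : p ≠ 0 := by rintro rfl; simp at hr
  subst hr0
  simpa [hp] using h

/-- The homogeneous part of degree 7 of `A₁₅`, dehomogenised by `x₁ = 1`. -/
noncomputable def topForm (α : K) : K[X] :=
  1 - C (α - 1) * X - C 2 * X ^ 2 + C (α + 1) * X ^ 3 - C (α - 2) * X ^ 4 - C 2 * X ^ 5
    + C α * X ^ 6 + X ^ 7

lemma natDegree_topForm (α : K) : (topForm α).natDegree = 7 := by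
  unfold topForm
  compute_degree!

/-- The top form divides the separable polynomial `X ^ 15 + 1`. -/
lemma separable_topForm [CharZero K] {α : K} (hα : α ^ 2 - α + 4 = 0) :
    (topForm α).Separable := by
  have h := separable_X_pow_sub_C (n := 15) (-1 : K) (by norm_num) (by norm_num)
  refine h.of_dvd ⟨1 + C (α - 1) * X - C (α + 1) * X ^ 2 + C 2 * X ^ 3 - X ^ 4 + C 2 * X ^ 5
    + C (α - 2) * X ^ 6 - C α * X ^ 7 + X ^ 8, ?_⟩
  have hC : C α ^ 2 - C α + 4 = (0 : K[X]) := by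
    rw [← map_pow, ← map_sub, show (4 : K[X]) = C 4 from rfl, ← map_add, hα, map_zero]
  simp only [topForm, map_sub, map_add, map_neg, map_one, show (C 2 : K[X]) = 2 from rfl]
  linear_combination (X ^ 2 - X ^ 3 - X ^ 4 + 2 * X ^ 5 - X ^ 6 - X ^ 9 + 2 * X ^ 10 - X ^ 11
    - X ^ 12 + X ^ 13) * hC

/-- A polynomial `f * g` with the graded shape of `A₁₅` has no factor `f` of total degree 1, 2 or 3.
Besides the top form and the vanishing part of degree 6, only the values at `X = 0` matter, that is,
the coefficients of `A₁₅(x, 0)`. -/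
lemma natDegree_eq_zero_of_factor [CharZero K] {t α : K} (htr : Transcendental ℚ t)
    (hα : α ^ 2 - α + 4 = 0) {f g : K[X][X]}
    (hf : ∀ n, (f.coeff n).natDegree ≤ n) (hg : ∀ n, (g.coeff n).natDegree ≤ n)
    (hN : (f * g).natDegree = 7) (h₇ : (f * g).coeff 7 = topForm α) (h₆ : (f * g).coeff 6 = 0)
    (h₅ : ((f * g).coeff 5).eval 0 = (7 * α - 3) * t)
    (h₄ : ((f * g).coeff 4).eval 0 = (5 * α + 65) * t)
    (h₃ : ((f * g).coeff 3).eval 0 = (9 * α - 69) * t ^ 2)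
    (h₂ : ((f * g).coeff 2).eval 0 = (210 * α - 150) * t ^ 2)
    (h₁ : ((f * g).coeff 1).eval 0 = -((63 * α + 45) * t ^ 3 - (225 * α + 900) * t ^ 2))
    (h₀ : ((f * g).coeff 0).eval 0 = -675 * t ^ 3)
    (hd : f.natDegree ≤ 3) : f.natDegree = 0 := by
  have ht : t ≠ 0 := by
    rintro rfl
    exact htr isAlgebraic_zero
  have hfg : f * g ≠ 0 := by
    intro h
    simp [h] at hN
  rw [natDegree_mul (left_ne_zero_of_mul hfg) (right_ne_zero_of_mul hfg)] at hN
  by_contra hpos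
  have hsep := separable_topForm hα
  have hdeg := natDegree_topForm α
  have hne : topForm α ≠ 0 := hsep.ne_zero
  have htop : f.coeff f.natDegree * g.coeff g.natDegree = topForm α := by
    rw [← h₇, ← hN, coeff_mul_degree_add_degree]; rfl
  -- both top parts must attain their degree bounds, since `topForm α` has degree `7`
  have hdf : (f.coeff f.natDegree).natDegree = f.natDegree := by
    rw [← htop] at hne hdeg
    rw [natDegree_mul (left_ne_zero_of_mul hne) (right_ne_zero_of_mul hne)] at hdeg
    have := hf f.natDegree
    have := hg g.natDegree
    omega
  have hev : (f.coeff f.natDegree).eval 0 * (g.coeff g.natDegree).eval 0 = 1 := by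
    rw [← eval_mul, htop]
    simp [topForm]
  have hfz : ∀ i, f.natDegree < i → f.coeff i = 0 := fun i => coeff_eq_zero_of_natDegree_lt
  have hgz : ∀ i, g.natDegree < i → g.coeff i = 0 := fun i => coeff_eq_zero_of_natDegree_lt
  have hmul : ∀ n, (f * g).coeff n = ∑ i ∈ Finset.range n.succ, f.coeff i * g.coeff (n - i) :=
    fun n => by
      rw [coeff_mul, Finset.Nat.sum_antidiagonal_eq_sum_range_succ (fun i j => f.coeff i * g.coeff j)]
  rw [← htop] at hsep
  -- `d` and `e` are the total degrees of the two factors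
  generalize f.natDegree = d at *
  generalize g.natDegree = e at *
  obtain rfl | rfl | rfl : d = 1 ∨ d = 2 ∨ d = 3 := by omega
  · obtain rfl : e = 6 := by omega
    have hz := subleading_eq_zero hsep (r := f.coeff 0) (s := g.coeff 5)
      (by rw [← h₆, hmul]; simp [Finset.sum_range_succ, hfz]; ring)
      (by have := hf 0; omega)
    rw [hmul] at h₀
    simp [hz.1, ht] at h₀
  · obtain rfl : e = 5 := by omega
    have hz := subleading_eq_zero hsep (r := f.coeff 1) (s := g.coeff 4)
      (by rw [← h₆, hmul]; simp [Finset.sum_range_succ, hfz, hgz]; ring)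
      (by have := hf 1; omega)
    rw [hmul] at h₀ h₁ h₂ h₃ h₄ h₅
    simp [Finset.sum_range_succ, hfz, hz.1, hz.2] at h₀ h₁ h₂ h₃ h₄ h₅
    -- the rescaled coefficients of the monic normalisations of the factors; `hev` is `b₂ * c₅ = 1`
    generalize eval 0 (f.coeff 2) = b₂, eval 0 (f.coeff 0) = b₀, eval 0 (g.coeff 5) = c₅,
      eval 0 (g.coeff 3) = c₃, eval 0 (g.coeff 2) = c₂, eval 0 (g.coeff 1) = c₁,
      eval 0 (g.coeff 0) = c₀ at *
    refine no_deg_two htr hα (w := b₀ * c₅ / t) (p := b₂ * c₃ / t) (q := b₂ * c₂ / t)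
      (r := b₂ * c₁ / t ^ 2) (s := b₂ * c₀ / t ^ 2) ?_ ?_ ?_ ?_ ?_ ?_ <;> field_simp
    · linear_combination h₄
    · linear_combination h₂ + b₀ * c₂ * hev
    · linear_combination h₁ + b₀ * c₁ * hev
    · linear_combination h₃ + b₀ * c₃ * hev
    · linear_combination h₅
    · linear_combination h₀ + b₀ * c₀ * hev
  · obtain rfl : e = 4 := by omega
    have hz := subleading_eq_zero hsep (r := f.coeff 2) (s := g.coeff 3)
      (by rw [← h₆, hmul]; simp [Finset.sum_range_succ, hfz, hgz]; ring)
      (by have := hf 2; omega)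
    rw [hmul] at h₀ h₁ h₂ h₃ h₄ h₅
    simp [Finset.sum_range_succ, hfz, hgz, hz.1, hz.2] at h₀ h₁ h₂ h₃ h₄ h₅
    generalize eval 0 (f.coeff 3) = b₃, eval 0 (f.coeff 1) = b₁, eval 0 (f.coeff 0) = b₀,
      eval 0 (g.coeff 4) = c₄, eval 0 (g.coeff 2) = c₂, eval 0 (g.coeff 1) = c₁,
      eval 0 (g.coeff 0) = c₀ at *
    refine no_deg_three htr hα (u := b₁ * c₄ / t) (w := b₀ * c₄ / t) (l := b₃ * c₂ / t)
      (m := b₃ * c₁ / t) (n := b₃ * c₀ / t ^ 2) ?_ ?_ ?_ ?_ ?_ ?_ <;> field_simp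
    · linear_combination h₅
    · linear_combination h₄
    · linear_combination h₃ + b₁ * c₂ * hev
    · linear_combination h₂ + (b₁ * c₁ + b₀ * c₂) * hev
    · linear_combination h₁ + (b₁ * c₀ + b₀ * c₁) * hev
    · linear_combination h₀ + b₀ * c₀ * hev

lemma irreducible_of_gradedHom [CharZero K] {t α : K} (htr : Transcendental ℚ t)
    (hα : α ^ 2 - α + 4 = 0) {A : MvPolynomial (Fin 2) K}
    (hA : gradedHom K A = C (topForm α) * X ^ 7
      + C (C ((7 * α - 3) * t) + C (22 * t) * X - C ((10 * α + 2) * t) * X ^ 2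
          + C ((10 * α - 12) * t) * X ^ 3 + C (22 * t) * X ^ 4 - C ((7 * α - 4) * t) * X ^ 5) * X ^ 5
      + C (C ((5 * α + 65) * t) - C ((50 * α - 70) * t) * X - C (90 * t) * X ^ 2
          + C ((50 * α + 20) * t) * X ^ 3 - C ((5 * α - 70) * t) * X ^ 4) * X ^ 4
      + C (C ((9 * α - 69) * t ^ 2) + C ((39 * α + 33) * t ^ 2) * X
          - C ((39 * α - 72) * t ^ 2) * X ^ 2 - C ((9 * α + 60) * t ^ 2) * X ^ 3) * X ^ 3
      + C (C ((210 * α - 150) * t ^ 2) + C (450 * t ^ 2) * X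
          - C ((210 * α - 60) * t ^ 2) * X ^ 2) * X ^ 2
      + C (-C ((63 * α + 45) * t ^ 3 - (225 * α + 900) * t ^ 2)
          + C ((63 * α - 108) * t ^ 3 - (225 * α - 1125) * t ^ 2) * X) * X
      + C (-C (675 * t ^ 3))) :
    Irreducible A := by
  have hne : topForm α ≠ 0 := (separable_topForm hα).ne_zero
  have hN : (gradedHom K A).natDegree = 7 := by
    rw [hA]
    compute_degree!
  have hA0 : A ≠ 0 := by
    rintro rfl
    simp at hN
  have key : ∀ P Q : MvPolynomial (Fin 2) K, A = P * Q → (gradedHom K P).natDegree ≤ 3 →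
      IsUnit P := by
    intro P Q hPQ hd
    have hP : P ≠ 0 := by
      rintro rfl
      simp [hPQ] at hA0
    refine isUnit_of_natDegree_gradedHom hP ?_
    rw [hPQ, map_mul] at hA hN
    refine natDegree_eq_zero_of_factor htr hα (natDegree_coeff_gradedHom P)
      (natDegree_coeff_gradedHom Q) hN ?_ ?_ ?_ ?_ ?_ ?_ ?_ ?_ hd <;>
    rw [hA] <;>
    simp only [coeff_add, coeff_C_mul, coeff_X_pow, coeff_X, coeff_C] <;> norm_num
  rw [irreducible_iff]
  refine ⟨fun hu => ?_, fun P Q hPQ => ?_⟩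
  · have := natDegree_eq_zero_of_isUnit (hu.map (gradedHom K))
    omega
  · have hsum := hN
    rw [hPQ] at hA0
    rw [hPQ, map_mul, natDegree_mul] at hsum
    · rcases Nat.lt_or_ge 3 (gradedHom K P).natDegree with h | h
      · exact Or.inr (key Q P (hPQ.trans (mul_comm P Q)) (by omega))
      · exact Or.inl (key P Q hPQ h)
    all_goals
      rw [Ne, map_eq_zero_iff _ gradedHom_injective]
    · exact left_ne_zero_of_mul hA0
    · exact right_ne_zero_of_mul hA0

end Graded

end Helpers

open MvPolynomial in
/-- Let `K` be an algebraically closed field of characteristic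
zero, let `t ∈ K` be transcendental over `ℚ`, and let `α ∈ K` satisfy
`α² − α + 4 = 0`.  Then the factor `A₁₅` of `f₁₅(x₁) + f₁₅^σ(x₂)` is irreducible
in `K[x₁,x₂]`. -/
theorem A₁₅_irreducible
    {K : Type*} [Field K] [CharZero K] [IsAlgClosed K] (t α : K)
    (htr : Transcendental ℚ t) (hα : α^2 - α + 4 = 0) :
    Irreducible
      (X 0 ^ 7 - C (α - 1) * X 0 ^ 6 * X 1 - C (2 : K) * X 0 ^ 5 * X 1 ^ 2
        + C ((7*α - 3) * t) * X 0 ^ 5 + C (α + 1) * X 0 ^ 4 * X 1 ^ 3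
        + C (22 * t) * X 0 ^ 4 * X 1 + C ((5*α + 65) * t) * X 0 ^ 4
        - C (α - 2) * X 0 ^ 3 * X 1 ^ 4 - C ((10*α + 2) * t) * X 0 ^ 3 * X 1 ^ 2
        - C ((50*α - 70) * t) * X 0 ^ 3 * X 1 + C ((9*α - 69) * t^2) * X 0 ^ 3
        - C (2 : K) * X 0 ^ 2 * X 1 ^ 5 + C ((10*α - 12) * t) * X 0 ^ 2 * X 1 ^ 3
        - C (90 * t) * X 0 ^ 2 * X 1 ^ 2 + C ((39*α + 33) * t^2) * X 0 ^ 2 * X 1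
        + C ((210*α - 150) * t^2) * X 0 ^ 2 + C α * X 0 * X 1 ^ 6
        + C (22 * t) * X 0 * X 1 ^ 4 + C ((50*α + 20) * t) * X 0 * X 1 ^ 3
        - C ((39*α - 72) * t^2) * X 0 * X 1 ^ 2 + C (450 * t^2) * X 0 * X 1
        - C ((63*α + 45) * t^3 - (225*α + 900) * t^2) * X 0 + X 1 ^ 7
        - C ((7*α - 4) * t) * X 1 ^ 5 - C ((5*α - 70) * t) * X 1 ^ 4
        - C ((9*α + 60) * t^2) * X 1 ^ 3 - C ((210*α - 60) * t^2) * X 1 ^ 2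
        + C ((63*α - 108) * t^3 - (225*α - 1125) * t^2) * X 1
        - C (675 * t^3) : MvPolynomial (Fin 2) K) := by
  apply irreducible_of_gradedHom htr hα
  simp only [gradedHom, topForm, map_sub, map_add, map_mul, map_pow, MvPolynomial.aeval_X,
    MvPolynomial.aeval_C, Polynomial.algebraMap_apply, Algebra.algebraMap_self, RingHom.id_apply,
    Matrix.cons_val_zero, Matrix.cons_val_one, map_neg, map_one, map_ofNat]
  ring
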